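/- arXiv:math/0012063 — 4 statements merged into one kernel-verified Lean document; each statement's English description precedes it below -/
import Mathlib

section
/- For every nonzero ℓ ∈ F and every a ∈ ℕ, the polynomial p = C(ℓ)·det[X]^a ∈ R satisfies D(p) = q·p, where q = C(d(ℓ)/ℓ) + a·Σ_{i=1}^n Y_{ii}. In particular, D(det[X]) = (Σ_{i=1}^n Y_{ii})·det[X], and every ℓ·det[X]^a is a Darboux polynomial in R. -/
open MvPolynomial

/-- The polynomial ring `R = F{Y_ij}[X_ij]`: multivariate polynomials over `F` in the
variables `Y i j k` (indexed by `Sum.inl (i,j,k)`) and `X i j` (indexed by `Sum.inr (i,j)`). -/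
abbrev Rgen (F : Type*) [Field F] (n : ℕ) : Type _ :=
  MvPolynomial ((Fin n × Fin n × ℕ) ⊕ (Fin n × Fin n)) F

/-- `det[X]`: the determinant of the `n × n` matrix whose `(i,j)` entry is the variable `X i j`. -/
noncomputable def detX (F : Type*) [Field F] (n : ℕ) : Rgen F n :=
  (Matrix.of fun i j : Fin n => X (Sum.inr (i, j))).det

/-- The `F`-subalgebra `F{Y}` of `R` generated by all the variables `Y i j k`. -/
noncomputable def FY (F : Type*) [Field F] (n : ℕ) : Subalgebra F (Rgen F n) :=
  Algebra.adjoin F (Set.range fun v : Fin n × Fin n × ℕ => X (Sum.inl v))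

/-- The `F`-subalgebra `F[X]` of `R` generated by all the variables `X i j`. -/
noncomputable def FX (F : Type*) [Field F] (n : ℕ) : Subalgebra F (Rgen F n) :=
  Algebra.adjoin F (Set.range fun v : Fin n × Fin n => X (Sum.inr v))

/-!
A derivation differentiates a determinant one row at a time. If `D M = B * M` entrywise, then in the
`i`-th term row `i` is a combination of the rows of `M`, and only its multiple `B i i` of row `i`
itself survives, so `D (det M) = tr B * det M`. Cofactors add under multiplication, as logarithmic
derivatives do, which gives the cofactor of `C ℓ * det[X] ^ a`.
-/

section Determinant

variable {k A ι : Type*} [CommSemiring k]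

theorem derivation_prod {M : Type*} [CommSemiring A] [AddCommMonoid M] [Algebra k A] [Module A M]
    [Module k M] [DecidableEq ι] (D : Derivation k A M) (s : Finset ι) (f : ι → A) :
    D (∏ i ∈ s, f i) = ∑ i ∈ s, (∏ j ∈ s.erase i, f j) • D (f i) := by
  induction s using Finset.induction_on with
  | empty => simp
  | insert a s ha ih =>
    have prod_erase_insert (i : ι) (hi : i ∈ s) :
        ∏ j ∈ (insert a s).erase i, f j = f a * ∏ j ∈ s.erase i, f j := by
      rw [Finset.erase_insert_of_ne (ne_of_mem_of_not_mem hi ha).symm,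
        Finset.prod_insert (mt Finset.mem_of_mem_erase ha)]
    rw [Finset.prod_insert ha, D.leibniz, ih, Finset.sum_insert ha, Finset.erase_insert ha,
      Finset.smul_sum, add_comm]
    congr 1
    exact Finset.sum_congr rfl fun i hi => by rw [prod_erase_insert i hi, mul_smul]

variable [CommRing A] [Algebra k A] [Fintype ι] [DecidableEq ι]

theorem derivation_det_eq_sum_det_updateRow (D : Derivation k A A) (M : Matrix ι ι A) :
    D M.det = ∑ i, (M.updateRow i fun j => D (M i j)).det := by
  have det_eq_sum_prod_rows (N : Matrix ι ι A) :
      N.det = ∑ σ : Equiv.Perm ι, Equiv.Perm.sign σ • ∏ i, N i (σ i) := by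
    simp only [← N.det_transpose, Matrix.det_apply, Matrix.transpose_apply]
  have prod_updateRow (σ : Equiv.Perm ι) (i : ι) :
      ∏ j, M.updateRow i (fun l => D (M i l)) j (σ j) =
        (∏ j ∈ Finset.univ.erase i, M j (σ j)) * D (M i (σ i)) := by
    rw [← Finset.prod_erase_mul _ _ (Finset.mem_univ i), Matrix.updateRow_self]
    congr 1
    exact Finset.prod_congr rfl fun j hj => by rw [Matrix.updateRow_ne (Finset.ne_of_mem_erase hj)]
  calc D M.det
      = ∑ σ : Equiv.Perm ι, Equiv.Perm.sign σ • D (∏ i, M i (σ i)) := by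
        simp only [det_eq_sum_prod_rows, map_sum, Units.smul_def, map_zsmul]
    _ = ∑ σ : Equiv.Perm ι, ∑ i, Equiv.Perm.sign σ •
          ∏ j, M.updateRow i (fun l => D (M i l)) j (σ j) := by
        simp only [derivation_prod, prod_updateRow, smul_eq_mul, Finset.smul_sum]
    _ = ∑ i, (M.updateRow i fun j => D (M i j)).det := by
        simp only [det_eq_sum_prod_rows]
        exact Finset.sum_comm

end Determinant

section Darboux

variable {k A : Type*} [CommSemiring k]

/-- `IsDarboux D p q` says that `p` is a Darboux element of the derivation `D` with cofactor `q`;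
in a polynomial ring these are the Darboux polynomials. Constants, including `0`, are allowed. -/
def IsDarboux [CommSemiring A] [Algebra k A] (D : Derivation k A A) (p q : A) : Prop :=
  D p = q * p

namespace IsDarboux

section CommSemiring

variable [CommSemiring A] [Algebra k A] {D : Derivation k A A} {p₁ p₂ q₁ q₂ p q : A}

theorem one : IsDarboux D 1 0 := by
  simp [IsDarboux]

theorem mul (h₁ : IsDarboux D p₁ q₁) (h₂ : IsDarboux D p₂ q₂) :
    IsDarboux D (p₁ * p₂) (q₁ + q₂) := by
  unfold IsDarboux at h₁ h₂ ⊢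
  rw [D.leibniz, h₁, h₂, smul_eq_mul, smul_eq_mul]
  ring

theorem pow (h : IsDarboux D p q) (a : ℕ) : IsDarboux D (p ^ a) (a • q) := by
  induction a with
  | zero => simpa only [pow_zero, zero_smul] using one
  | succ a ih => simpa only [pow_succ, succ_nsmul] using ih.mul h

end CommSemiring

variable {ι : Type*} [CommRing A] [Algebra k A] [Fintype ι] [DecidableEq ι]
  {D : Derivation k A A} {M B : Matrix ι ι A}

theorem det (h : M.map D = B * M) : IsDarboux D M.det B.trace := by
  have hrow (i : ι) : (fun j => D (M i j)) = ∑ l, B i l • M l := by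
    ext j
    simpa [Matrix.mul_apply] using congr_fun₂ h i j
  calc D M.det
      = ∑ i, (M.updateRow i (∑ l, B i l • M l)).det := by
        simp only [derivation_det_eq_sum_det_updateRow, hrow]
    _ = ∑ i, B i i * M.det := by simp only [Matrix.det_updateRow_sum, smul_eq_mul]
    _ = B.trace * M.det := (Finset.sum_mul ..).symm

end IsDarboux

theorem stmt_1_general {ι : Type*} [CommRing A] [Algebra k A] [Fintype ι] [DecidableEq ι]
    (D : Derivation k A A) (M B : Matrix ι ι A) (hM : M.map D = B * M) {p q : A}
    (hp : IsDarboux D p q) (a : ℕ) :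
    IsDarboux D (p * M.det ^ a) (q + a • B.trace) ∧ IsDarboux D M.det B.trace :=
  ⟨hp.mul ((IsDarboux.det hM).pow a), IsDarboux.det hM⟩

end Darboux

/-- The derivation with underlying function `D`, an additive map satisfying the Leibniz rule. It is
only `ℤ`-linear, since `D` need not vanish on the coefficients of a polynomial ring. -/
def derivationOfLeibniz {A : Type*} [CommRing A] (D : A → A)
    (hadd : ∀ a b, D (a + b) = D a + D b) (hmul : ∀ a b, D (a * b) = D a * b + a * D b) :
    Derivation ℤ A A :=
  Derivation.mk' (AddMonoidHom.mk' D hadd).toIntLinearMap fun a b => by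
    simp [hmul, mul_comm, add_comm]

/-- For nonzero `ℓ ∈ F` and `a ∈ ℕ`, `p = C ℓ * det[X]^a` is a Darboux
polynomial with cofactor `q = C (d ℓ / ℓ) + a • ∑ i, Y i i`; in particular
`D det[X] = (∑ i, Y i i) * det[X]`. -/
theorem stmt_1
    {F : Type*} [Field F] [CharZero F] (d : F → F)
    (hd_add : ∀ a b : F, d (a + b) = d a + d b)
    (hd_mul : ∀ a b : F, d (a * b) = d a * b + a * d b)
    (n : ℕ) (hn : 1 ≤ n)
    (D : Rgen F n → Rgen F n)
    (hD_add : ∀ a b, D (a + b) = D a + D b)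
    (hD_mul : ∀ a b, D (a * b) = D a * b + a * D b)
    (hD_C : ∀ f : F, D (C f) = C (d f))
    (hD_Y : ∀ (i j : Fin n) (k : ℕ),
      D (X (Sum.inl (i, j, k))) = X (Sum.inl (i, j, k + 1)))
    (hD_X : ∀ i j : Fin n,
      D (X (Sum.inr (i, j))) = ∑ l : Fin n, X (Sum.inl (i, l, 0)) * X (Sum.inr (l, j)))
    (l : F) (hl : l ≠ 0) (a : ℕ) :
    D (C l * detX F n ^ a) =
      (C (d l / l) + a • ∑ i : Fin n, X (Sum.inl (i, i, (0 : ℕ)))) * (C l * detX F n ^ a) ∧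
    D (detX F n) = (∑ i : Fin n, X (Sum.inl (i, i, (0 : ℕ)))) * detX F n := by
  have hC : D (C l) = C (d l / l) * C l := by rw [hD_C, ← C_mul, div_mul_cancel₀ _ hl]
  exact stmt_1_general (derivationOfLeibniz D hD_add hD_mul) (.of fun i j => X (.inr (i, j)))
    (.of fun i j => X (.inl (i, j, 0))) (Matrix.ext hD_X) hC a
end

section
/- If p ∈ R and q ∈ F{Y} satisfy D(p) = q·p, then p ∈ F[X], i.e. p involves none of the Y-variables. -/
open MvPolynomial

/-!
Bracketing `D` with partial derivatives lowers the order of the variable: `[∂/∂y_{k+1}, D] = ∂/∂y_k`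
along each chain `D y_k = y_{k+1}`. Suppose `p` divides `D p`. If `p` does not involve `y_{k+1}`,
then applying this identity to `p` shows that `p` divides `∂p/∂y_k`, whose degree in `y_k` is too
small unless it vanishes; so `p` does not involve `y_k` either. As `p` involves only finitely many
variables, one can descend from a large `k`.
-/

section PartialDerivative

variable {σ A : Type*} [CommSemiring A] {v : σ} {p : MvPolynomial σ A}

theorem pderiv_eq_zero_iff_notMem_vars [IsAddTorsionFree A] : pderiv v p = 0 ↔ v ∉ p.vars := by
  refine ⟨fun h hv => ?_, pderiv_eq_zero_of_notMem_vars⟩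
  obtain ⟨m, hm, hmv⟩ := (mem_vars_iff_mem_support v).1 hv
  have single_le : Finsupp.single v 1 ≤ m :=
    Finsupp.single_le_iff.2 (Nat.one_le_iff_ne_zero.2 (Finsupp.mem_support_iff.1 hmv))
  have coeff_eq_zero := coeff_pderiv (i := v) p (m - Finsupp.single v 1)
  rw [h, coeff_zero, tsub_add_cancel_of_le single_le, ← Nat.cast_succ, mul_comm,
    ← nsmul_eq_mul, eq_comm, nsmul_eq_zero_iff_right (Nat.succ_ne_zero _)] at coeff_eq_zero
  exact mem_support_iff.1 hm coeff_eq_zero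

theorem degreeOf_pderiv_lt (h : pderiv v p ≠ 0) : degreeOf v (pderiv v p) < degreeOf v p := by
  have exponent_lt : ∀ m ∈ (pderiv v p).support, m v < degreeOf v p := by
    intro m hm
    rw [mem_support_iff, coeff_pderiv] at hm
    have := monomial_le_degreeOf v (mem_support_iff.2 (left_ne_zero_of_mul hm))
    rwa [Finsupp.add_apply, Finsupp.single_eq_same] at this
  obtain ⟨m, hm⟩ := support_nonempty.2 h
  exact (degreeOf_lt_iff (Nat.zero_lt_of_lt (exponent_lt m hm))).2 exponent_lt

theorem dvd_pderiv_iff_eq_zero [NoZeroDivisors A] : p ∣ pderiv v p ↔ pderiv v p = 0 := by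
  refine ⟨fun ⟨c, hc⟩ => ?_, fun h => h ▸ dvd_zero p⟩
  by_contra hne
  have hlt := degreeOf_pderiv_lt hne
  rw [hc] at hne hlt
  rw [degreeOf_mul_eq (left_ne_zero_of_mul hne) (right_ne_zero_of_mul hne)] at hlt
  omega

end PartialDerivative

theorem exists_derivation_coe_eq {A : Type*} [CommRing A] {D : A → A}
    (add : ∀ a b, D (a + b) = D a + D b) (leibniz : ∀ a b, D (a * b) = D a * b + a * D b) :
    ∃ D' : Derivation ℤ A A, ⇑D' = D :=
  ⟨.mk' (AddMonoidHom.mk' D add).toIntLinearMap fun a b =>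
    (leibniz a b).trans (by simp [add_comm, mul_comm]), rfl⟩

/-- Unlike in `MvPolynomial.derivation_ext`, the derivations need not vanish on the coefficients. -/
theorem derivation_ext_of_C_of_X {S σ A M : Type*} [CommSemiring S] [CommSemiring A] [Algebra S A]
    [AddCommMonoid M] [Module S M] [Module (MvPolynomial σ A) M]
    {D₁ D₂ : Derivation S (MvPolynomial σ A) M}
    (hC : ∀ a, D₁ (C a) = D₂ (C a)) (hX : ∀ v, D₁ (X v) = D₂ (X v)) : D₁ = D₂ := by
  ext p
  induction p using MvPolynomial.induction_on with
  | C a => exact hC a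
  | add p q hp hq => rw [map_add, map_add, hp, hq]
  | mul_X p v hp => rw [Derivation.leibniz, Derivation.leibniz, hp, hX]

section Chain

variable {σ A : Type*} [CommRing A] {D : Derivation ℤ (MvPolynomial σ A) (MvPolynomial σ A)}
  {y : ℕ → σ}

theorem lie_pderiv_succ (hy : Function.Injective y)
    (hD_C : ∀ a k, pderiv (y (k + 1)) (D (C a)) = 0)
    (hD_y : ∀ k, D (X (y k)) = X (y (k + 1)))
    (hD_X : ∀ v ∉ Set.range y, ∀ k, pderiv (y (k + 1)) (D (X v)) = 0) (k : ℕ) :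
    ⁅(pderiv (R := A) (y (k + 1))).restrictScalars ℤ, D⁆ =
      (pderiv (y k)).restrictScalars ℤ := by
  classical
  refine derivation_ext_of_C_of_X (fun a => ?_) (fun v => ?_)
  · simp [Derivation.commutator_apply, hD_C]
  by_cases hv : v ∈ Set.range y
  · obtain ⟨l, rfl⟩ := hv
    simp [Derivation.commutator_apply, hD_y, pderiv_X, Pi.single_apply, hy.eq_iff, apply_ite D]
  · have ne_y : ∀ l, v ≠ y l := fun l h => hv ⟨l, h.symm⟩
    simp [Derivation.commutator_apply, hD_X v hv, pderiv_X_of_ne (ne_y _)]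

theorem dvd_pderiv_of_lie_eq {u v : σ} {p : MvPolynomial σ A}
    (hlie : ⁅(pderiv (R := A) u).restrictScalars ℤ, D⁆ = (pderiv v).restrictScalars ℤ)
    (hdvd : p ∣ D p) (hu : pderiv u p = 0) : p ∣ pderiv v p := by
  obtain ⟨q, hq⟩ := hdvd
  have commutator_eq : pderiv u (D p) - D (pderiv u p) = pderiv v p := DFunLike.congr_fun hlie p
  rw [hu, map_zero, sub_zero, hq, pderiv_mul, hu, zero_mul, zero_add] at commutator_eq
  exact ⟨_, commutator_eq.symm⟩

end Chain

theorem mem_FX_iff {F : Type*} [Field F] {n : ℕ} {p : Rgen F n} :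
    p ∈ FX F n ↔ ∀ v, Sum.inl v ∉ p.vars := by
  have FX_eq_supported : FX F n = supported F (Set.range Sum.inr) := by
    rw [FX, supported_eq_adjoin_X, ← Set.range_comp, Function.comp_def]
  rw [FX_eq_supported, mem_supported]
  simp [Set.subset_def]

theorem stmt_7_general {σ A : Type*} [CommRing A] [NoZeroDivisors A] [IsAddTorsionFree A]
    {D : Derivation ℤ (MvPolynomial σ A) (MvPolynomial σ A)} {y : ℕ → σ}
    (hy : Function.Injective y)
    (hD_C : ∀ a k, pderiv (y (k + 1)) (D (C a)) = 0)
    (hD_y : ∀ k, D (X (y k)) = X (y (k + 1)))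
    (hD_X : ∀ v ∉ Set.range y, ∀ k, pderiv (y (k + 1)) (D (X v)) = 0)
    {p : MvPolynomial σ A} (hdvd : p ∣ D p) (k : ℕ) : y k ∉ p.vars := by
  obtain ⟨N, hN⟩ : ∃ N, ∀ k ≥ N, y k ∉ p.vars :=
    Filter.eventually_atTop.1 <| Nat.cofinite_eq_atTop ▸
      hy.tendsto_cofinite.eventually p.vars.eventually_cofinite_notMem
  rcases le_total N k with hNk | hkN
  · exact hN k hNk
  refine Nat.decreasingInduction (motive := fun k _ => y k ∉ p.vars) (fun k _ hsucc => ?_)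
    (hN N le_rfl) hkN
  rw [← pderiv_eq_zero_iff_notMem_vars] at hsucc ⊢
  exact dvd_pderiv_iff_eq_zero.1
    (dvd_pderiv_of_lie_eq (lie_pderiv_succ hy hD_C hD_y hD_X k) hdvd hsucc)

/-- If `p ∈ R` and `q ∈ F{Y}` satisfy `D p = q * p`, then `p ∈ F[X]`,
i.e. `p` involves none of the `Y`-variables. -/
theorem stmt_7
    {F : Type*} [Field F] [CharZero F] (d : F → F)
    (hd_add : ∀ a b : F, d (a + b) = d a + d b)
    (hd_mul : ∀ a b : F, d (a * b) = d a * b + a * d b)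
    (n : ℕ) (hn : 1 ≤ n)
    (D : Rgen F n → Rgen F n)
    (hD_add : ∀ a b, D (a + b) = D a + D b)
    (hD_mul : ∀ a b, D (a * b) = D a * b + a * D b)
    (hD_C : ∀ f : F, D (C f) = C (d f))
    (hD_Y : ∀ (i j : Fin n) (k : ℕ),
      D (X (Sum.inl (i, j, k))) = X (Sum.inl (i, j, k + 1)))
    (hD_X : ∀ i j : Fin n,
      D (X (Sum.inr (i, j))) = ∑ l : Fin n, X (Sum.inl (i, l, 0)) * X (Sum.inr (l, j)))
    (p q : Rgen F n) (hq : q ∈ FY F n) (hDp : D p = q * p) :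
    p ∈ FX F n := by
  obtain ⟨D, rfl⟩ : ∃ D' : Derivation ℤ (Rgen F n) (Rgen F n), ⇑D' = D :=
    exists_derivation_coe_eq hD_add hD_mul
  refine mem_FX_iff.2 fun ⟨i, j, k⟩ =>
    stmt_7_general (y := fun k => Sum.inl (i, j, k)) (fun k l h => by simpa using h)
      (by simp [hD_C]) (hD_Y i j) ?_ (Dvd.intro_left q hDp.symm) k
  rintro (⟨a, b, l⟩ | ⟨a, b⟩) hv k
  · rw [hD_Y, pderiv_X_of_ne (by grind)]
  · simp [hD_X, pderiv_X]
end

section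
/- Let p ∈ F[X] be nonzero and q ∈ F{Y}, and suppose D(p) = q·p. Then q is a linear polynomial in the order-zero variables Y_{ij}: there exist c ∈ F and λ_{ij} ∈ F (1 ≤ i,j ≤ n) such that q = C(c) + Σ_{i,j} C(λ_{ij})·Y_{ij}. Moreover, for every i and every monomial of p with exponent vector β (so β_{ij} is the exponent of X_{ij} in that monomial), the coefficient λ_{ii} of Y_{ii} equals the row sum Σ_{j=1}^n β_{ij} (cast from ℕ into F); in particular, the sums Σ_{j=1}^n β_{ij} (1 ≤ i ≤ n) are independent of the choice of monomial of p. -/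
open MvPolynomial

/-!
View `F{Y}[X]` as polynomials in `Y` with coefficients in `F[X]`. By the chain rule, `D p` has
degree at most one in `Y`: the coefficient of `Y i l` is the polarization `∑ j, X l j * ∂p/∂X i j`,
and the part free of `Y` is `p` with differentiated coefficients. As `F[X]` is a domain,
`D p = q * p` forces `q` to have degree at most one in the same `Y i l`, and `p` is an eigenvector
of each polarization, with the coefficient of `Y i l` in `q` as eigenvalue. For `l = i` the
polarization is the Euler operator of the `i`-th row, which is diagonal on monomials, with the row
degrees as eigenvalues.
-/

section Polarization

variable {k A B σ ι κ : Type*} [CommSemiring k] [CommSemiring A] [CommSemiring B] [Algebra k B]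

/-- The witness `r` is `p` with its coefficients differentiated. -/
theorem exists_derivation_map_eq_add_sum_pderiv [Fintype σ] (D : Derivation k B B)
    (φ : MvPolynomial σ A →+* B) (hC : ∀ a, D (φ (C a)) ∈ φ.rangeS) (p : MvPolynomial σ A) :
    ∃ r, D (φ p) = φ r + ∑ v, φ (pderiv v p) * D (φ (X v)) := by
  classical
  induction p using MvPolynomial.induction_on with
  | C a =>
    obtain ⟨r, hr⟩ := hC a
    exact ⟨r, by simp [hr]⟩
  | add p q hp hq =>
    obtain ⟨r, hr⟩ := hp
    obtain ⟨s, hs⟩ := hq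
    refine ⟨r + s, ?_⟩
    simp only [map_add, hr, hs, add_mul, Finset.sum_add_distrib]
    ring
  | mul_X p w hp =>
    obtain ⟨r, hr⟩ := hp
    refine ⟨X w * r, ?_⟩
    have sum_leibniz : ∑ v, φ (pderiv v (p * X w)) * D (φ (X v)) =
        φ p * D (φ (X w)) + φ (X w) * ∑ v, φ (pderiv v p) * D (φ (X v)) := by
      simp only [Derivation.leibniz, smul_eq_mul, pderiv_X, map_add, map_mul, add_mul, mul_assoc,
        Finset.sum_add_distrib, ← Finset.mul_sum]
      simp [Pi.single_apply, apply_ite φ]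
    rw [sum_leibniz, map_mul φ, map_mul φ, Derivation.leibniz, smul_eq_mul, smul_eq_mul, hr]
    ring

theorem coeff_X_mul_pderiv_self (v : σ) (p : MvPolynomial σ A) (m : σ →₀ ℕ) :
    coeff m (X v * pderiv v p) = m v * coeff m p := by
  classical
  induction p using MvPolynomial.induction_on' with
  | monomial m' a =>
    rw [X_mul_pderiv_monomial, coeff_smul, nsmul_eq_mul, coeff_monomial]
    split_ifs with h
    · rw [h]
    · simp
  | add p q hp hq => rw [map_add, mul_add, coeff_add, hp, hq, coeff_add, mul_add]

/-- The polarization operator `∑ j, X l j * ∂/∂X i j`, which replaces the `i`-th row of the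
matrix of variables by the `l`-th one, one factor at a time. -/
noncomputable def rowPolarization [Fintype κ] (i l : ι) (p : MvPolynomial (ι × κ) A) :
    MvPolynomial (ι × κ) A :=
  ∑ j, X (l, j) * pderiv (i, j) p

theorem coeff_rowPolarization_self [Fintype κ] (i : ι) (p : MvPolynomial (ι × κ) A)
    (β : ι × κ →₀ ℕ) :
    coeff β (rowPolarization i i p) = ((∑ j, β (i, j) : ℕ) : A) * coeff β p := by
  simp only [rowPolarization, coeff_sum, coeff_X_mul_pderiv_self, Nat.cast_sum, Finset.sum_mul]

theorem eq_row_sum_of_rowPolarization_self_eq_C_mul [IsCancelMulZero A] [Fintype κ] {i : ι}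
    {p : MvPolynomial (ι × κ) A} {c : A} (h : rowPolarization i i p = C c * p)
    {β : ι × κ →₀ ℕ} (hβ : β ∈ p.support) : c = ((∑ j, β (i, j) : ℕ) : A) := by
  refine mul_right_cancel₀ (mem_support_iff.mp hβ) ?_
  rw [← coeff_C_mul, ← h, coeff_rowPolarization_self]

theorem exists_derivation_map_eq_add_sum_rowPolarization [Fintype ι] [Fintype κ]
    (D : Derivation k B B) (φ : MvPolynomial (ι × κ) A →+* B)
    (hC : ∀ a, D (φ (C a)) ∈ φ.rangeS) (y : ι × ι → B)
    (hX : ∀ i j, D (φ (X (i, j))) = ∑ l, y (i, l) * φ (X (l, j)))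
    (p : MvPolynomial (ι × κ) A) :
    ∃ r, D (φ p) = φ r + ∑ v, y v * φ (rowPolarization v.1 v.2 p) := by
  obtain ⟨r, hr⟩ := exists_derivation_map_eq_add_sum_pderiv D φ hC p
  refine ⟨r, hr.trans (congrArg (φ r + ·) ?_)⟩
  simp only [Fintype.sum_prod_type, hX, rowPolarization, map_sum, map_mul, Finset.mul_sum]
  refine Finset.sum_congr rfl fun i _ => Finset.sum_comm.trans ?_
  exact Finset.sum_congr rfl fun l _ => Finset.sum_congr rfl fun j _ => by ring

end Polarization

section AffineForm

variable {A S τ ν : Type*} [CommSemiring A] [CommSemiring S] [Fintype ν] {y : ν → τ}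

/-- The polynomial of degree at most one with constant term `a` and coefficient `b v` at the
variable `y v`; the family `y` singles out the variables allowed to occur. -/
noncomputable def affineForm (y : ν → τ) (a : S) (b : ν → S) : MvPolynomial τ S :=
  C a + ∑ v, C (b v) * X (y v)

theorem coeff_zero_affineForm (a : S) (b : ν → S) : coeff 0 (affineForm y a b) = a := by
  simp [affineForm, coeff_sum]

theorem coeff_single_affineForm (hy : Function.Injective y) (a : S) (b : ν → S) (v : ν) :
    coeff (Finsupp.single (y v) 1) (affineForm y a b) = b v := by
  classical
  simp [affineForm, coeff_sum, coeff_C, coeff_X, coeff_C_mul, Finsupp.single_left_inj,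
    hy.eq_iff, eq_comm (a := (0 : τ →₀ ℕ))]

theorem coeff_affineForm_eq_zero (a : S) (b : ν → S) {m : τ →₀ ℕ} (hm : m ≠ 0)
    (hm' : ∀ v, m ≠ Finsupp.single (y v) 1) : coeff m (affineForm y a b) = 0 := by
  classical
  simp [affineForm, coeff_sum, coeff_C, coeff_X, coeff_C_mul, hm.symm, (hm' _).symm]

theorem eq_affineForm_of_coeff_eq_zero (hy : Function.Injective y) {q : MvPolynomial τ S}
    (hq : ∀ m ≠ 0, (∀ v, m ≠ Finsupp.single (y v) 1) → coeff m q = 0) :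
    q = affineForm y (coeff 0 q) fun v => coeff (Finsupp.single (y v) 1) q := by
  ext m
  by_cases hm : m = 0
  · rw [hm, coeff_zero_affineForm]
  by_cases hm' : ∃ v, m = Finsupp.single (y v) 1
  · obtain ⟨v, rfl⟩ := hm'
    rw [coeff_single_affineForm hy]
  · rw [not_exists] at hm'
    rw [hq m hm hm', coeff_affineForm_eq_zero _ _ hm hm']

theorem eq_affineForm_of_C_mul_eq [NoZeroDivisors S] (hy : Function.Injective y)
    {p a : S} {b : ν → S} {q : MvPolynomial τ S} (hp : p ≠ 0) (h : C p * q = affineForm y a b) :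
    q = affineForm y (coeff 0 q) fun v => coeff (Finsupp.single (y v) 1) q := by
  refine eq_affineForm_of_coeff_eq_zero hy fun m hm hm' => ?_
  have coeff_mul : p * coeff m q = 0 := by
    rw [← coeff_C_mul, h, coeff_affineForm_eq_zero _ _ hm hm']
  exact (mul_eq_zero.mp coeff_mul).resolve_left hp

theorem map_affineForm (f : A →+* S) (a : A) (b : ν → A) :
    map f (affineForm y a b) = affineForm y (f a) fun v => f (b v) := by
  simp [affineForm]

end AffineForm

section SeparatedVariables

variable {A σ τ ν : Type*} [CommSemiring A]

theorem sumAlgEquiv_rename_inr (p : MvPolynomial σ A) :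
    sumAlgEquiv A τ σ (rename Sum.inr p) = C p :=
  DFunLike.congr_fun (sumAlgEquiv_comp_rename_inr A τ σ) p

theorem sumAlgEquiv_rename_inl (q : MvPolynomial τ A) :
    sumAlgEquiv A τ σ (rename Sum.inl q) = map C q :=
  DFunLike.congr_fun (sumAlgEquiv_comp_rename_inl A τ σ) q

theorem adjoin_range_X_comp (f : σ → τ) :
    Algebra.adjoin A (Set.range fun v => (X (f v) : MvPolynomial τ A)) =
      (rename f : MvPolynomial σ A →ₐ[A] MvPolynomial τ A).range := by
  rw [← Algebra.map_top, ← adjoin_range_X, AlgHom.map_adjoin, ← Set.range_comp]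
  simp [Function.comp_def]

variable [Fintype ν] {y : ν → τ} {p r : MvPolynomial σ A} {s : ν → MvPolynomial σ A}
  {q : MvPolynomial τ A}

theorem C_mul_map_C_eq_affineForm_of_rename_mul_rename_eq
    (h : rename Sum.inl q * rename Sum.inr p =
      rename Sum.inr r + ∑ v, X (Sum.inl (y v)) * rename Sum.inr (s v)) :
    C p * map C q = affineForm y r s := by
  have separated := congrArg (sumAlgEquiv A τ σ) h
  simpa [sumAlgEquiv_rename_inr, sumAlgEquiv_rename_inl, affineForm, mul_comm] using separated

theorem eq_affineForm_of_C_mul_map_C_eq [NoZeroDivisors A] (hy : Function.Injective y)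
    (hp : p ≠ 0) (h : C p * map C q = affineForm y r s) :
    q = affineForm y (coeff 0 q) fun v => coeff (Finsupp.single (y v) 1) q := by
  apply map_injective C (C_injective σ A)
  simpa only [map_affineForm, coeff_map] using eq_affineForm_of_C_mul_eq hy hp h

theorem eq_C_coeff_mul_of_C_mul_map_C_eq (hy : Function.Injective y)
    (h : C p * map C q = affineForm y r s) (v : ν) :
    s v = C (coeff (Finsupp.single (y v) 1) q) * p := by
  rw [← coeff_single_affineForm hy r s v, ← h, coeff_C_mul, coeff_map, mul_comm]

end SeparatedVariables

theorem stmt_8_general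
    {ι κ A : Type*} [Fintype ι] [Fintype κ] [CommRing A] [IsDomain A] (d : A → A)
    (D : Derivation ℤ (MvPolynomial ((ι × ι × ℕ) ⊕ (ι × κ)) A)
      (MvPolynomial ((ι × ι × ℕ) ⊕ (ι × κ)) A))
    (hD_C : ∀ a, D (C a) = C (d a))
    (hD_X : ∀ i j, D (X (Sum.inr (i, j))) = ∑ l, X (Sum.inl (i, l, 0)) * X (Sum.inr (l, j)))
    {p q : MvPolynomial ((ι × ι × ℕ) ⊕ (ι × κ)) A}
    (hp : p ∈ Algebra.adjoin A (Set.range fun v => X (Sum.inr v))) (hp0 : p ≠ 0)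
    (hq : q ∈ Algebra.adjoin A (Set.range fun v => X (Sum.inl v)))
    (hDp : D p = q * p) :
    ∃ (c : A) (lam : ι → ι → A),
      q = C c + ∑ i, ∑ j, C (lam i j) * X (Sum.inl (i, j, 0)) ∧
      ∀ i, ∀ β ∈ p.support, lam i i = ((∑ j, β (Sum.inr (i, j)) : ℕ) : A) := by
  classical
  rw [adjoin_range_X_comp] at hp hq
  obtain ⟨p, rfl : rename Sum.inr p = _⟩ := hp
  obtain ⟨q, rfl : rename Sum.inl q = _⟩ := hq
  let y : ι × ι → ι × ι × ℕ := fun v => (v.1, v.2, 0)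
  have hy : Function.Injective y := fun v w h => by simpa [y, Prod.ext_iff] using h
  obtain ⟨r, hr⟩ := exists_derivation_map_eq_add_sum_rowPolarization D
    (rename Sum.inr : MvPolynomial (ι × κ) A →ₐ[A] _).toRingHom
    (fun a => ⟨C (d a), by simp [hD_C]⟩) (fun v => X (Sum.inl (y v))) (by simpa [y] using hD_X) p
  have separated := C_mul_map_C_eq_affineForm_of_rename_mul_rename_eq (hDp.symm.trans hr)
  have hp0' : p ≠ 0 := fun h => hp0 (by simp [h])
  refine ⟨coeff 0 q, fun i l => coeff (Finsupp.single (y (i, l)) 1) q, ?_, fun i β hβ => ?_⟩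
  · have q_affine := eq_affineForm_of_C_mul_map_C_eq hy hp0' separated
    simpa [affineForm, y, Fintype.sum_prod_type] using congrArg (rename Sum.inl) q_affine
  · rw [support_rename_of_injective Sum.inr_injective, Finset.mem_image] at hβ
    obtain ⟨γ, hγ, rfl⟩ := hβ
    simp only [Finsupp.mapDomain_apply Sum.inr_injective]
    exact eq_row_sum_of_rowPolarization_self_eq_C_mul
      (eq_C_coeff_mul_of_C_mul_map_C_eq hy separated (i, i)) hγ

/-- If `p ∈ F[X]` is nonzero, `q ∈ F{Y}` and `D p = q * p`, then `q` is
linear in the order-zero variables `Y i j`, and for every `i` the coefficient of `Y i i`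
equals the `i`-th row sum of the exponent vector of every monomial of `p`; in particular
these row sums are independent of the monomial. -/
theorem stmt_8
    {F : Type*} [Field F] [CharZero F] (d : F → F)
    (hd_add : ∀ a b : F, d (a + b) = d a + d b)
    (hd_mul : ∀ a b : F, d (a * b) = d a * b + a * d b)
    (n : ℕ) (hn : 1 ≤ n)
    (D : Rgen F n → Rgen F n)
    (hD_add : ∀ a b, D (a + b) = D a + D b)
    (hD_mul : ∀ a b, D (a * b) = D a * b + a * D b)
    (hD_C : ∀ f : F, D (C f) = C (d f))
    (hD_Y : ∀ (i j : Fin n) (k : ℕ),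
      D (X (Sum.inl (i, j, k))) = X (Sum.inl (i, j, k + 1)))
    (hD_X : ∀ i j : Fin n,
      D (X (Sum.inr (i, j))) = ∑ l : Fin n, X (Sum.inl (i, l, 0)) * X (Sum.inr (l, j)))
    (p q : Rgen F n) (hp : p ∈ FX F n) (hp0 : p ≠ 0) (hq : q ∈ FY F n)
    (hDp : D p = q * p) :
    ∃ (c : F) (lam : Fin n → Fin n → F),
      q = C c + ∑ i : Fin n, ∑ j : Fin n, C (lam i j) * X (Sum.inl (i, j, (0 : ℕ))) ∧
      ∀ i : Fin n, ∀ β ∈ p.support, lam i i = ((∑ j : Fin n, β (Sum.inr (i, j)) : ℕ) : F) := by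
  exact stmt_8_general d
    (.mk' (AddMonoidHom.mk' D hD_add).toIntLinearMap fun a b => by
      simpa [mul_comm, add_comm] using hD_mul a b) hD_C hD_X hp hp0 hq hDp
end

section
/- Let p ∈ F[X] be nonzero and q ∈ F{Y} with D(p) = q·p, and let α = lp(p). Then there exists a ∈ ℕ such that α_{i,n+1−i} = a for every 1 ≤ i ≤ n and α_{ij} = 0 whenever j ≠ n+1−i. Equivalently, lp(p) = a·(Σ_{i=1}^n e_{i,n+1−i}), the exponent vector of (X_{1n}·X_{2,n−1}·⋯·X_{n1})^a, which is the leading exponent vector of det[X]^a; in particular p is not reduced with respect to det[X] unless p is constant. -/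
open MvPolynomial

/-- Strict degree reverse lexicographic comparison `α < β` of exponent vectors in the
`X`-variables, for the variable ordering `X 1 1 > X 1 2 > ⋯ > X 1 n > X 2 1 > ⋯ > X n n`:
either the total degree of `α` is smaller, or the total degrees agree and at the last
(rightmost, i.e. smallest) variable where they differ, `α` has the larger exponent. -/
def degRevLexLT {n : ℕ} (α β : (Fin n × Fin n) →₀ ℕ) : Prop :=
  (∑ v : Fin n × Fin n, α v) < (∑ v : Fin n × Fin n, β v) ∨
  ((∑ v : Fin n × Fin n, α v) = (∑ v : Fin n × Fin n, β v) ∧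
    ∃ v : Fin n × Fin n, β v < α v ∧
      ∀ w : Fin n × Fin n, (v.1 < w.1 ∨ (v.1 = w.1 ∧ v.2 < w.2)) → α w = β w)

/-! A Darboux polynomial `p ∈ F[X]` is an eigenvector of every polarization operator
`E i l = ∑ j, X l j * ∂/∂X i j`: compare the coefficients of `Y i l` in `D p = q * p`. The diagonal
operators `E i i` measure the degree in row `i`, so `p` is homogeneous in each row, and
`⁅E i l, E l i⁆ = E l l - E i i` makes all the row degrees equal. For `i ≠ l` the operator `E i l`
lowers the degree in row `i`, so it kills `p`.

Let `α` be the leading exponent and suppose that `α i j ≠ 0`. The contribution of `X ^ α` to the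
coefficient of `X ^ α * X l j / X i j` in `E i l p = 0` is cancelled by some other monomial
`X ^ α * (X l j * X i j') / (X i j * X l j')` of `p`. Since it is smaller than `X ^ α`, one has
`j < j'` if `l < i`, and `j' < j` if `i < l`. Thus occupied columns move strictly to the right when
going up the rows and to the left when going down, and only the antidiagonal leaves room for
this. -/

section Polarization

variable {R ι κ : Type*} [Fintype κ]

section CommSemiring

variable [CommSemiring R]

/-- The polarization operator `∑ j, X (l, j) * ∂/∂X (i, j)` of classical invariant theory: the
infinitesimal action of adding a multiple of row `l` of a matrix of variables to row `i`. -/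
noncomputable def polarization (i l : ι) :
    Derivation R (MvPolynomial (ι × κ) R) (MvPolynomial (ι × κ) R) :=
  ∑ j, (X (l, j) : MvPolynomial (ι × κ) R) • pderiv (i, j)

/-- A polynomial in a matrix of variables is a polarization eigenvector if it is zero or an
eigenvector of every polarization operator, that is, a semi-invariant of the Lie algebra of row
operations. -/
def IsPolarizationEigenvector (p : MvPolynomial (ι × κ) R) : Prop :=
  ∀ i l, ∃ c : R, polarization i l p = c • p

lemma polarization_apply (i l : ι) (p : MvPolynomial (ι × κ) R) :
    polarization i l p = ∑ j, X (l, j) * pderiv (i, j) p := by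
  change Derivation.coeFnAddMonoidHom (∑ j, _) p = _
  rw [map_sum, Finset.sum_apply]
  rfl

lemma polarization_X [DecidableEq ι] (i l : ι) (v : ι × κ) :
    polarization i l (X v : MvPolynomial (ι × κ) R) = if v.1 = i then X (l, v.2) else 0 := by
  classical
  obtain ⟨r, j⟩ := v
  by_cases hr : r = i
  · simp [polarization_apply, pderiv_X, Pi.single_apply, hr]
  · simp [polarization_apply, hr]

lemma exists_add_single_one_eq {σ : Type*} {a : σ} {β : σ →₀ ℕ} (ha : β a ≠ 0) :
    ∃ γ, γ + Finsupp.single a 1 = β :=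
  ⟨_, tsub_add_cancel_of_le (Finsupp.single_le_iff.mpr (Nat.one_le_iff_ne_zero.mpr ha))⟩

lemma exists_of_coeff_X_mul_pderiv_ne_zero {σ : Type*} {a b : σ} {p : MvPolynomial σ R}
    {δ : σ →₀ ℕ} (h : coeff δ (X a * pderiv b p) ≠ 0) :
    ∃ γ, γ + Finsupp.single a 1 = δ ∧ coeff (γ + Finsupp.single b 1) p ≠ 0 := by
  classical
  rw [coeff_X_mul'] at h
  split_ifs at h with ha
  · obtain ⟨γ, rfl⟩ := exists_add_single_one_eq (Finsupp.mem_support_iff.mp ha)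
    rw [add_tsub_cancel_right, coeff_pderiv] at h
    exact ⟨γ, rfl, left_ne_zero_of_mul h⟩
  · exact absurd rfl h

lemma coeff_polarization_self (i : ι) (p : MvPolynomial (ι × κ) R) (β : ι × κ →₀ ℕ) :
    coeff β (polarization i i p) = (∑ j, β (i, j) : ℕ) * coeff β p := by
  classical
  rw [polarization_apply, coeff_sum, Nat.cast_sum, Finset.sum_mul]
  refine Finset.sum_congr rfl fun j _ => ?_
  by_cases hj : β (i, j) = 0
  · simp [coeff_X_mul', hj]
  · obtain ⟨γ, rfl⟩ := exists_add_single_one_eq hj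
    rw [add_comm γ, coeff_X_mul, coeff_pderiv, add_comm γ]
    simp [mul_comm, add_comm]

lemma exists_exchange_of_coeff_polarization_eq_zero [CharZero R] [NoZeroDivisors R]
    {p : MvPolynomial (ι × κ) R} {i l : ι} {j : κ} {γ : ι × κ →₀ ℕ}
    (hγ : coeff (γ + Finsupp.single (i, j) 1) p ≠ 0)
    (h : coeff (γ + Finsupp.single (l, j) 1) (polarization i l p) = 0) :
    ∃ j' ≠ j, ∃ γ', γ' + Finsupp.single (l, j') 1 = γ + Finsupp.single (l, j) 1 ∧
      coeff (γ' + Finsupp.single (i, j') 1) p ≠ 0 := by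
  classical
  rw [polarization_apply, coeff_sum, ← Finset.add_sum_erase _ _ (Finset.mem_univ j)] at h
  have hj : coeff (γ + Finsupp.single (l, j) 1) (X (l, j) * pderiv (i, j) p) ≠ 0 := by
    rw [add_comm γ, coeff_X_mul, coeff_pderiv]
    exact mul_ne_zero hγ (Nat.cast_add_one_ne_zero _)
  obtain ⟨j', hj', hne⟩ := Finset.exists_ne_zero_of_sum_ne_zero
    fun h0 => hj (by rwa [h0, add_zero] at h)
  exact ⟨j', Finset.ne_of_mem_erase hj', exists_of_coeff_X_mul_pderiv_ne_zero hne⟩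

end CommSemiring

section CommRing

variable [CommRing R]

lemma lie_polarization [DecidableEq ι] (i l r s : ι) :
    ⁅polarization (R := R) (κ := κ) i l, polarization (R := R) (κ := κ) r s⁆ =
      (if s = i then polarization r l else 0) - if l = r then polarization i s else 0 := by
  refine MvPolynomial.derivation_ext fun v => ?_
  rw [Derivation.commutator_apply, Derivation.sub_apply]
  by_cases hr : v.1 = r <;> by_cases hi : v.1 = i <;> by_cases hs : s = i <;>
    by_cases hl : l = r <;> simp_all [polarization_X]

namespace IsPolarizationEigenvector

variable {p : MvPolynomial (ι × κ) R}

lemma polarization_self_eq (hp : IsPolarizationEigenvector p) (i l : ι) :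
    polarization i i p = polarization l l p := by
  classical
  obtain ⟨c, hc⟩ := hp i l
  obtain ⟨c', hc'⟩ := hp l i
  have hlie : ⁅polarization (R := R) (κ := κ) i l, polarization (R := R) (κ := κ) l i⁆ p = 0 := by
    rw [Derivation.commutator_apply, hc, hc', Derivation.map_smul, Derivation.map_smul, hc, hc',
      smul_comm, sub_self]
  rw [lie_polarization, if_pos rfl, if_pos rfl, Derivation.sub_apply, sub_eq_zero] at hlie
  exact hlie.symm

variable [CharZero R] [IsDomain R]

lemma sum_row_eq {α β : ι × κ →₀ ℕ} (hp : IsPolarizationEigenvector p) (hα : α ∈ p.support)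
    (hβ : β ∈ p.support) (i l : ι) : ∑ j, α (i, j) = ∑ j, β (l, j) := by
  obtain ⟨c, hc⟩ := hp i i
  have sum_row_eq_c : ∀ {δ : ι × κ →₀ ℕ} {r : ι}, δ ∈ p.support → (∑ j, δ (r, j) : ℕ) = c := by
    intro δ r hδ
    refine mul_right_cancel₀ (mem_support_iff.mp hδ) ?_
    rw [← coeff_polarization_self, hp.polarization_self_eq r i, hc, coeff_smul, smul_eq_mul]
  exact Nat.cast_injective (R := R) ((sum_row_eq_c hα).trans (sum_row_eq_c hβ).symm)

lemma polarization_eq_zero {i l : ι} (hp : IsPolarizationEigenvector p) (hil : i ≠ l) :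
    polarization i l p = 0 := by
  classical
  obtain ⟨c, hc⟩ := hp i l
  ext δ
  rw [coeff_zero]
  by_contra hδ
  have hδp : δ ∈ p.support := by
    rw [hc, coeff_smul] at hδ
    exact mem_support_iff.mpr (right_ne_zero_of_mul hδ)
  rw [polarization_apply, coeff_sum] at hδ
  obtain ⟨j, -, hj⟩ := Finset.exists_ne_zero_of_sum_ne_zero hδ
  obtain ⟨γ, rfl, hγ⟩ := exists_of_coeff_X_mul_pderiv_ne_zero hj
  have row_sum_lowered := hp.sum_row_eq hδp (mem_support_iff.mpr hγ) i i
  simp [Finsupp.single_apply, hil.symm, Finset.sum_add_distrib] at row_sum_lowered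

end IsPolarizationEigenvector

end CommRing

end Polarization

section Darboux

section CommSemiring

variable {R σ τ : Type*} [CommSemiring R]

/-- The evaluation at `f : σ → R` of the first block of variables of `R[σ ⊕ τ]`, which fixes the
second block; values at different `f` detect the coefficients of the first block of variables. -/
noncomputable def specializeLeft (f : σ → R) : MvPolynomial (σ ⊕ τ) R →ₐ[R] MvPolynomial τ R :=
  aeval (Sum.elim (fun v => C (f v)) X)

lemma specializeLeft_X_inl (f : σ → R) (v : σ) :
    specializeLeft (τ := τ) f (X (Sum.inl v)) = C (f v) := by
  simp [specializeLeft]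

lemma specializeLeft_rename_inr (f : σ → R) (p : MvPolynomial τ R) :
    specializeLeft f (rename Sum.inr p) = p := by
  simp only [specializeLeft, aeval_rename, Sum.elim_comp_inr, aeval_X_left_apply]

lemma exists_specializeLeft_eq_C (f : σ → R) {q : MvPolynomial (σ ⊕ τ) R}
    (hq : q ∈ Algebra.adjoin R (Set.range fun v : σ => X (Sum.inl v))) :
    ∃ c, specializeLeft f q = C c := by
  have hle : Algebra.adjoin R (Set.range fun v : σ => (X (Sum.inl v) : MvPolynomial (σ ⊕ τ) R)) ≤
      (⊥ : Subalgebra R (MvPolynomial τ R)).comap (specializeLeft f) := by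
    rw [Algebra.adjoin_le_iff]
    rintro _ ⟨v, rfl⟩
    exact Algebra.mem_bot.mpr ⟨f v, (specializeLeft_X_inl f v).symm⟩
  obtain ⟨c, hc⟩ := Algebra.mem_bot.mp (hle hq)
  exact ⟨c, hc.symm⟩

end CommSemiring

variable {R σ ι κ : Type*} [CommRing R] [Fintype ι] [Fintype κ] {y : ι → ι → σ} {d : R → R}
  {D : Derivation ℤ (MvPolynomial (σ ⊕ ι × κ) R) (MvPolynomial (σ ⊕ ι × κ) R)}

lemma specializeLeft_derivation (hC : ∀ a, D (C a) = C (d a))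
    (hX : ∀ i j, D (X (Sum.inr (i, j))) = ∑ l, X (Sum.inl (y i l)) * X (Sum.inr (l, j)))
    (f : σ → R) (p : MvPolynomial (ι × κ) R) :
    specializeLeft f (D (rename Sum.inr p)) = specializeLeft 0 (D (rename Sum.inr p)) +
      ∑ i, ∑ l, f (y i l) • polarization i l p := by
  classical
  induction p using MvPolynomial.induction_on with
  | C a => simp [hC, specializeLeft]
  | add p p' hp hp' =>
    simp only [map_add, hp, hp', smul_add, Finset.sum_add_distrib]
    ring
  | mul_X p v hp =>
    have hv : ∀ g : σ → R, specializeLeft g (D (rename Sum.inr (X v))) =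
        ∑ i, ∑ l, g (y i l) • polarization i l (X v) := by
      intro g
      obtain ⟨i, j⟩ := v
      rw [rename_X, hX, map_sum, eq_comm,
        Finset.sum_eq_single i (fun r _ hr => by simp [polarization_X, hr.symm]) (by simp)]
      simp [polarization_X, specializeLeft, smul_eq_C_mul]
    have hv₀ : specializeLeft 0 (D (rename Sum.inr (X v))) = 0 := by
      simp only [hv, Pi.zero_apply, zero_smul, Finset.sum_const_zero]
    rw [map_mul, Derivation.leibniz]
    simp only [smul_eq_mul, map_add, map_mul, specializeLeft_rename_inr, hp, hv₀, hv f,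
      Derivation.leibniz, smul_add, Finset.sum_add_distrib, ← mul_smul_comm, ← Finset.mul_sum]
    ring

lemma isPolarizationEigenvector_of_darboux (hy : Function.Injective2 y)
    (hC : ∀ a, D (C a) = C (d a))
    (hX : ∀ i j, D (X (Sum.inr (i, j))) = ∑ l, X (Sum.inl (y i l)) * X (Sum.inr (l, j)))
    {p : MvPolynomial (ι × κ) R} {q : MvPolynomial (σ ⊕ ι × κ) R}
    (hq : q ∈ Algebra.adjoin R (Set.range fun v : σ => X (Sum.inl v)))
    (hDp : D (rename Sum.inr p) = q * rename Sum.inr p) : IsPolarizationEigenvector p := by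
  classical
  intro i l
  obtain ⟨c₀, hc₀⟩ := exists_specializeLeft_eq_C 0 hq
  obtain ⟨c₁, hc₁⟩ := exists_specializeLeft_eq_C (Pi.single (y i l) 1) hq
  have h := specializeLeft_derivation hC hX (Pi.single (y i l) 1) p
  have hsum : ∑ r, ∑ s, (Pi.single (y i l) 1 : σ → R) (y r s) • polarization r s p =
      polarization i l p := by
    rw [Finset.sum_eq_single i (fun r _ hr => by simp [hy.eq_iff, hr]) (by simp)]
    rw [Finset.sum_eq_single l (fun s _ hs => by simp [hy.eq_iff, hs]) (by simp)]
    rw [Pi.single_eq_same, one_smul]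
  rw [hDp, map_mul, map_mul, specializeLeft_rename_inr, specializeLeft_rename_inr, hc₀, hc₁, hsum]
    at h
  exact ⟨c₁ - c₀, by rw [smul_eq_C_mul, C_sub, sub_mul, h, add_sub_cancel_left]⟩

end Darboux

section Antidiagonal

lemma add_lt_of_forall_exists_lt {n : ℕ} {P : Fin n → Fin n → Prop}
    (hP : ∀ i j l, P i j → l < i → ∃ j', j < j' ∧ P l j') {i j : Fin n} (hij : P i j) :
    (i + j : ℕ) < n := by
  induction hk : (i : ℕ) generalizing i j with
  | zero => omega
  | succ k ih =>
    obtain ⟨j', hjj', hj'⟩ := hP i j ⟨k, by omega⟩ hij (Fin.lt_def.mpr (by simp [hk]))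
    have := ih hj' rfl
    omega

lemma eq_rev_of_forall_exists_lt {n : ℕ} {P : Fin n → Fin n → Prop}
    (hup : ∀ i j l, P i j → l < i → ∃ j', j < j' ∧ P l j')
    (hdown : ∀ i j l, P i j → i < l → ∃ j', j' < j ∧ P l j') {i j : Fin n} (hij : P i j) :
    j = i.rev := by
  have hle := add_lt_of_forall_exists_lt hup hij
  have hge : (i.rev + j.rev : ℕ) < n := by
    refine add_lt_of_forall_exists_lt (P := fun i j => P i.rev j.rev) (fun i j l h hli => ?_)
      (by simpa only [Fin.rev_rev] using hij)
    obtain ⟨j', hj', hP⟩ := hdown _ _ l.rev h (Fin.rev_lt_rev.mpr hli)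
    exact ⟨j'.rev, Fin.lt_rev_iff.mpr hj', by rwa [Fin.rev_rev]⟩
  rw [Fin.ext_iff]
  simp only [Fin.val_rev] at hge ⊢
  omega

lemma lt_and_lt_or_lt_and_lt_of_degRevLexLT {n : ℕ} {γ γ' : Fin n × Fin n →₀ ℕ}
    {i l j j' : Fin n} (hil : i ≠ l)
    (h : γ' + Finsupp.single (l, j') 1 = γ + Finsupp.single (l, j) 1)
    (hlt : degRevLexLT (γ' + Finsupp.single (i, j') 1) (γ + Finsupp.single (i, j) 1)) :
    (l < i ∧ j < j') ∨ (i < l ∧ j' < j) := by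
  have hsum : ∑ v, γ' v = ∑ v, γ v := by
    have := congrArg (fun δ : Fin n × Fin n →₀ ℕ => ∑ v, δ v) h
    simpa [Finset.sum_add_distrib, Finsupp.single_apply] using this
  have hpt : ∀ v, γ' v + Finsupp.single (l, j') 1 v = γ v + Finsupp.single (l, j) 1 v :=
    fun v => DFunLike.congr_fun h v
  rcases hlt with hdeg | ⟨-, v, hv, hw⟩
  · simp [Finset.sum_add_distrib, Finsupp.single_apply, hsum] at hdeg
  simp only [Finsupp.add_apply] at hv hw
  have hjj' : j ≠ j' := by
    rintro rfl
    have := hpt v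
    omega
  have hv_eq : v = (l, j) ∨ v = (i, j') := by
    by_contra! hne
    have := hpt v
    rw [Finsupp.single_eq_of_ne hne.1] at this
    rw [Finsupp.single_eq_of_ne hne.2] at hv
    omega
  have h_ij : ¬ (v.1 < i ∨ v.1 = i ∧ v.2 < j) := fun hlex => by
    have hγ : γ' (i, j) = γ (i, j) := by simpa [hil] using hpt (i, j)
    have hlast : γ' (i, j) = γ (i, j) + 1 := by simpa [hjj'] using hw (i, j) hlex
    omega
  have h_lj' : ¬ (v.1 < l ∨ v.1 = l ∧ v.2 < j') := fun hlex => by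
    have hγ : γ' (l, j') + 1 = γ (l, j') := by simpa [hjj'.symm] using hpt (l, j')
    have hlast : γ' (l, j') = γ (l, j') := by simpa [hil.symm] using hw (l, j') hlex
    omega
  rcases hv_eq with rfl | rfl <;> grind

lemma eq_smul_sum_single {ι κ : Type*} [Fintype ι] {f : ι → κ} {a : ℕ} {α : ι × κ →₀ ℕ}
    (hα : ∀ i, α (i, f i) = a) (hα' : ∀ i j, j ≠ f i → α (i, j) = 0) :
    α = a • ∑ i, Finsupp.single (i, f i) 1 := by
  classical
  ext ⟨i, j⟩
  rw [Finsupp.smul_apply, Finsupp.finsetSum_apply, smul_eq_mul]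
  by_cases hj : j = f i
  · subst hj
    rw [hα, Finset.sum_eq_single i (fun r _ hr => Finsupp.single_eq_of_ne (by grind)) (by simp),
      Finsupp.single_eq_same, mul_one]
  · rw [hα' i j hj, Finset.sum_eq_zero, mul_zero]
    rintro r -
    exact Finsupp.single_eq_of_ne (by grind)

namespace IsPolarizationEigenvector

variable {R : Type*} [CommRing R] [CharZero R] [IsDomain R] {n : ℕ}
  {p : MvPolynomial (Fin n × Fin n) R} {α : Fin n × Fin n →₀ ℕ}

lemma exists_exchange_of_leading (hp : IsPolarizationEigenvector p) (hα : α ∈ p.support)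
    (hlead : ∀ β ∈ p.support, β ≠ α → degRevLexLT β α) {i j l : Fin n} (hij : α (i, j) ≠ 0)
    (hil : i ≠ l) : ∃ j', α (l, j') ≠ 0 ∧ ((l < i ∧ j < j') ∨ (i < l ∧ j' < j)) := by
  obtain ⟨γ, rfl⟩ := exists_add_single_one_eq hij
  obtain ⟨j', hj', γ', hγ', hβ⟩ := exists_exchange_of_coeff_polarization_eq_zero (l := l)
    (mem_support_iff.mp hα) (by rw [hp.polarization_eq_zero hil, coeff_zero])
  have hγ_lj' : γ' (l, j') + 1 = γ (l, j') := by
    simpa [hj'.symm] using DFunLike.congr_fun hγ' (l, j')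
  have hne : γ' + Finsupp.single (i, j') 1 ≠ γ + Finsupp.single (i, j) 1 := fun h => by
    simpa [hil, ← hγ_lj'] using DFunLike.congr_fun h (l, j')
  exact ⟨j', by simp [← hγ_lj'], lt_and_lt_or_lt_and_lt_of_degRevLexLT hil hγ'
    (hlead _ (mem_support_iff.mpr hβ) hne)⟩

lemma eq_rev_of_leading (hp : IsPolarizationEigenvector p) (hα : α ∈ p.support)
    (hlead : ∀ β ∈ p.support, β ≠ α → degRevLexLT β α) {i j : Fin n} (hij : α (i, j) ≠ 0) :
    j = i.rev := by
  refine eq_rev_of_forall_exists_lt (P := fun i j => α (i, j) ≠ 0) (fun i j l h hli => ?_)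
    (fun i j l h hil => ?_) hij
  · obtain ⟨j', hj', ⟨-, hlt⟩ | ⟨hil, -⟩⟩ := hp.exists_exchange_of_leading hα hlead h hli.ne'
    · exact ⟨j', hlt, hj'⟩
    · exact absurd hil hli.asymm
  · obtain ⟨j', hj', ⟨hli, -⟩ | ⟨-, hlt⟩⟩ := hp.exists_exchange_of_leading hα hlead h hil.ne
    · exact absurd hli hil.asymm
    · exact ⟨j', hlt, hj'⟩

end IsPolarizationEigenvector

end Antidiagonal

/-- The leading exponent vector (degrevlex) of a nonzero Darboux
polynomial `p ∈ F[X]` equals the exponent vector of `(X_{1n} X_{2,n-1} ⋯ X_{n1})^a`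
for some `a ∈ ℕ`, i.e. the leading exponent vector of `det[X]^a`. -/
theorem stmt_12
    {F : Type*} [Field F] [CharZero F] (d : F → F)
    (hd_add : ∀ a b : F, d (a + b) = d a + d b)
    (hd_mul : ∀ a b : F, d (a * b) = d a * b + a * d b)
    (n : ℕ) (hn : 1 ≤ n)
    (D : Rgen F n → Rgen F n)
    (hD_add : ∀ a b, D (a + b) = D a + D b)
    (hD_mul : ∀ a b, D (a * b) = D a * b + a * D b)
    (hD_C : ∀ f : F, D (C f) = C (d f))
    (hD_Y : ∀ (i j : Fin n) (k : ℕ),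
      D (X (Sum.inl (i, j, k))) = X (Sum.inl (i, j, k + 1)))
    (hD_X : ∀ i j : Fin n,
      D (X (Sum.inr (i, j))) = ∑ l : Fin n, X (Sum.inl (i, l, 0)) * X (Sum.inr (l, j)))
    (p0 : MvPolynomial (Fin n × Fin n) F) (hp0 : p0 ≠ 0)
    (q : Rgen F n) (hq : q ∈ FY F n)
    (hDp : D (rename Sum.inr p0) = q * rename Sum.inr p0)
    (α : (Fin n × Fin n) →₀ ℕ) (hmem : α ∈ p0.support)
    (hlead : ∀ β ∈ p0.support, β ≠ α → degRevLexLT β α)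
    :
    ∃ a : ℕ, (∀ i : Fin n, α (i, i.rev) = a) ∧
      (∀ i j : Fin n, j ≠ i.rev → α (i, j) = 0) ∧
      α = a • ∑ i : Fin n, Finsupp.single (i, i.rev) 1 := by
  let D' : Derivation ℤ (Rgen F n) (Rgen F n) :=
    Derivation.mk' (AddMonoidHom.mk' D hD_add).toIntLinearMap fun a b =>
      (hD_mul a b).trans (by rw [smul_eq_mul, smul_eq_mul, mul_comm (D a), add_comm]; rfl)
  have hp : IsPolarizationEigenvector p0 :=
    isPolarizationEigenvector_of_darboux (D := D') (y := fun i l => (i, l, 0))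
      (fun _ _ _ _ h => by simpa using h) hD_C hD_X hq hDp
  have hoff : ∀ i j : Fin n, j ≠ i.rev → α (i, j) = 0 :=
    fun i j => not_imp_comm.mp (hp.eq_rev_of_leading hmem hlead)
  have hrow : ∀ i, ∑ j, α (i, j) = α (i, i.rev) :=
    fun i => Finset.sum_eq_single _ (fun j _ => hoff i j) (by simp)
  have hanti : ∀ i, α (i, i.rev) = ∑ j, α (⟨0, hn⟩, j) :=
    fun i => (hrow i).symm.trans (hp.sum_row_eq hmem hmem _ _)
  exact ⟨_, hanti, hoff, eq_smul_sum_single hanti hoff⟩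
end
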